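/- arXiv:2411.10808 — 7 statements merged into one kernel-verified Lean document; each statement's English description precedes it below -/
import Mathlib

section
/- Let P be a real n×n matrix and let R = [[2P, −P], [I_n, 0_n]] be the real 2n×2n block matrix with top-left block 2P, top-right block −P, bottom-left block I_n, and bottom-right block 0_n. If λ ∈ ℂ is a nonzero eigenvalue of R, then λ ≠ 1/2 and μ := λ²/(2λ − 1) is a (complex) eigenvalue of P. -/
open Matrix

theorem spec_iff_aux {m : Type*} [Fintype m] [DecidableEq m] (A : Matrix m m ℂ) (μ : ℂ) :
    μ ∈ spectrum ℂ A ↔ ∃ v : m → ℂ, v ≠ 0 ∧ A *ᵥ v = μ • v := by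
  rw [spectrum.mem_iff, Matrix.isUnit_iff_isUnit_det, isUnit_iff_ne_zero, not_not,
    ← Matrix.exists_mulVec_eq_zero_iff]
  refine exists_congr fun v => and_congr_right fun _ => ?_
  rw [Matrix.sub_mulVec, sub_eq_zero, Algebra.algebraMap_eq_smul_one, Matrix.smul_mulVec,
    Matrix.one_mulVec, eq_comm]

theorem stmt2 (n : ℕ) (P : Matrix (Fin n) (Fin n) ℝ) (lam : ℂ)
    (hlam : lam ∈ spectrum ℂ
      ((Matrix.fromBlocks ((2 : ℝ) • P) (-P)
        (1 : Matrix (Fin n) (Fin n) ℝ) (0 : Matrix (Fin n) (Fin n) ℝ)).map Complex.ofReal))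
    (hne : lam ≠ 0) :
    lam ≠ 1 / 2 ∧ lam ^ 2 / (2 * lam - 1) ∈ spectrum ℂ (P.map Complex.ofReal) := by
  rw [spec_iff_aux] at hlam
  obtain ⟨v, hv, h⟩ := hlam
  have e1 : ((2 : ℝ) • P).map Complex.ofReal = (2 : ℂ) • P.map Complex.ofReal := by
    ext i j; simp
  have e2 : (-P).map Complex.ofReal = - P.map Complex.ofReal := by
    ext i j; simp
  have e3 : (1 : Matrix (Fin n) (Fin n) ℝ).map Complex.ofReal = 1 := by
    ext i j; simp [Matrix.one_apply, apply_ite]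
  have e4 : (0 : Matrix (Fin n) (Fin n) ℝ).map Complex.ofReal = 0 := by
    ext i j; simp
  rw [Matrix.fromBlocks_map, e1, e2, e3, e4, Matrix.fromBlocks_mulVec] at h
  set Q := P.map Complex.ofReal
  set x := v ∘ Sum.inl with hx
  set y := v ∘ Sum.inr with hy
  have h2 : x = lam • y := by
    ext i
    have := congrFun h (Sum.inr i)
    simpa [hy] using this
  have h1 : (2 : ℂ) • Q *ᵥ x - Q *ᵥ y = lam • x := by
    ext i
    have := congrFun h (Sum.inl i)
    simpa [hx, Matrix.smul_mulVec, Matrix.neg_mulVec, sub_eq_add_neg] using this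
  have hy0 : y ≠ 0 := by
    intro h0
    apply hv
    ext i
    rcases i with i | i
    · have := congrFun h2 i
      simpa [h0, hx] using this
    · exact congrFun h0 i
  have h3 : (2 * lam - 1) • Q *ᵥ y = lam ^ 2 • y := by
    rw [h2, Matrix.mulVec_smul] at h1
    rw [sub_smul, one_smul, mul_smul, h1, smul_smul, sq]
  have hl : 2 * lam - 1 ≠ 0 := by
    intro h0
    rw [h0, zero_smul] at h3
    exact (smul_ne_zero (pow_ne_zero 2 hne) hy0) h3.symm
  refine ⟨fun h0 => hl (by rw [h0]; norm_num), ?_⟩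
  rw [spec_iff_aux]
  refine ⟨y, hy0, ?_⟩
  rw [div_eq_inv_mul, mul_smul, ← h3, inv_smul_smul₀ hl]
end

section
/- Let W be a real symmetric n×n matrix all of whose eigenvalues lie in [0,1], let A be a nonzero real m×n matrix, and suppose ker(A) ∩ fix(W) = {0}. Then for every γ with 0 < γ < 1/λ_max(AᵀA), every complex eigenvalue of the matrix P_γ = W(I_n − γAᵀA) is real and lies in the interval [0,1). -/
open Matrix

/-- The largest eigenvalue of a real (symmetric) matrix, as the supremum of its real
spectrum. -/
noncomputable def lamMax {n : ℕ} (S : Matrix (Fin n) (Fin n) ℝ) : ℝ := sSup (spectrum ℝ S)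

theorem aux_spec {n : ℕ} (M : Matrix (Fin n) (Fin n) ℝ) (r : ℝ) :
    r ∈ spectrum ℝ M ↔ ∃ v : Fin n → ℝ, v ≠ 0 ∧ M *ᵥ v = r • v := by
  rw [spectrum.mem_iff, Matrix.isUnit_iff_isUnit_det, isUnit_iff_ne_zero, not_not,
    ← Matrix.exists_mulVec_eq_zero_iff]
  refine exists_congr fun v => and_congr_right fun _ => ?_
  rw [Matrix.sub_mulVec, sub_eq_zero, Algebra.algebraMap_eq_smul_one, Matrix.smul_mulVec,
    Matrix.one_mulVec, eq_comm]

open scoped MatrixOrder in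
theorem aux_factor {n : ℕ} (W : Matrix (Fin n) (Fin n) ℝ) (hW : W.PosSemidef) :
    ∃ C : Matrix (Fin n) (Fin n) ℝ, W = Cᴴ * C := by
  obtain ⟨C, hC⟩ := CStarAlgebra.nonneg_iff_eq_star_mul_self.mp hW.nonneg
  exact ⟨C, hC⟩

theorem aux_real {n : ℕ} (W B : Matrix (Fin n) (Fin n) ℝ) (hW : W.PosSemidef)
    (hB : B.PosSemidef) (μ : ℂ) (hμ : μ ∈ spectrum ℂ ((W * B).map Complex.ofReal)) :
    ∃ r : ℝ, μ = (r : ℂ) ∧ 0 ≤ r ∧ r ∈ spectrum ℝ (W * B) := by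
  obtain ⟨C, rfl⟩ := aux_factor W hW
  have hH : (C * B * Cᴴ).PosSemidef := hB.mul_mul_conjTranspose_same C
  have hc : (Cᴴ * C * B).charpoly = (C * B * Cᴴ).charpoly := by
    rw [Matrix.mul_assoc, Matrix.charpoly_mul_comm]
  have h2 := hH.1.charpoly_eq
  rw [Matrix.mem_spectrum_iff_isRoot_charpoly] at hμ
  have h3 : ((Cᴴ * C * B).map Complex.ofReal).charpoly
      = (Cᴴ * C * B).charpoly.map Complex.ofRealHom := Matrix.charpoly_map _ Complex.ofRealHom
  rw [h3, hc, h2, Polynomial.IsRoot, Polynomial.eval_map, Polynomial.eval₂_finset_prod,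
    Finset.prod_eq_zero_iff] at hμ
  obtain ⟨i, -, hi⟩ := hμ
  refine ⟨hH.1.eigenvalues i, ?_, hH.eigenvalues_nonneg i, ?_⟩
  · simpa [sub_eq_zero] using hi
  · have := hH.1.eigenvalues_mem_spectrum_real i
    rwa [Matrix.mem_spectrum_iff_isRoot_charpoly, ← hc,
      ← Matrix.mem_spectrum_iff_isRoot_charpoly] at this

theorem aux_posDef {n m : ℕ} (A : Matrix (Fin m) (Fin n) ℝ)
    (γ : ℝ) (hγ0 : 0 < γ) (hγ1 : γ < 1 / lamMax (Aᵀ * A)) :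
    (1 - γ • (Aᵀ * A)).PosDef := by
  have hH : (1 - γ • (Aᵀ * A)).IsHermitian := by
    simp [Matrix.IsHermitian, Matrix.conjTranspose_eq_transpose_of_trivial]
  have hl : 0 < lamMax (Aᵀ * A) := one_div_pos.mp (hγ0.trans hγ1)
  rw [hH.posDef_iff_eigenvalues_pos]
  intro i
  have hi := hH.eigenvalues_mem_spectrum_real i
  generalize hH.eigenvalues i = e at hi ⊢
  obtain ⟨v, hv, he⟩ := (aux_spec _ _).mp hi
  have hm : (1 - e) / γ ∈ spectrum ℝ (Aᵀ * A) := by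
    refine (aux_spec _ _).mpr ⟨v, hv, ?_⟩
    rw [Matrix.sub_mulVec, Matrix.one_mulVec, Matrix.smul_mulVec] at he
    have : γ • ((Aᵀ * A) *ᵥ v) = (1 - e) • v := by
      rw [sub_smul, one_smul, ← he]; abel
    rw [div_eq_inv_mul, mul_smul, ← this, smul_smul, inv_mul_cancel₀ hγ0.ne', one_smul]
  have hle : (1 - e) / γ ≤ lamMax (Aᵀ * A) :=
    le_csSup (Matrix.finite_real_spectrum (𝕜 := ℝ)).bddAbove hm
  rw [div_le_iff₀ hγ0] at hle
  rw [lt_div_iff₀ hl] at hγ1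
  nlinarith

theorem stmt7 (n m : ℕ) (W : Matrix (Fin n) (Fin n) ℝ) (A : Matrix (Fin m) (Fin n) ℝ)
    (hW : W.PosSemidef) (hW1 : ((1 : Matrix (Fin n) (Fin n) ℝ) - W).PosSemidef)
    (hA : A ≠ 0)
    (hker : ∀ x : Fin n → ℝ, A *ᵥ x = 0 → W *ᵥ x = x → x = 0)
    (γ : ℝ) (hγ0 : 0 < γ) (hγ1 : γ < 1 / lamMax (Aᵀ * A)) :
    ∀ μ ∈ spectrum ℂ ((W * (1 - γ • (Aᵀ * A))).map Complex.ofReal),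
      ∃ r : ℝ, μ = (r : ℂ) ∧ 0 ≤ r ∧ r < 1 := by
  intro μ hμ
  have hB := aux_posDef A γ hγ0 hγ1
  obtain ⟨r, hr, hr0, hs⟩ := aux_real W _ hW hB.posSemidef μ hμ
  refine ⟨r, hr, hr0, ?_⟩
  obtain ⟨x, hx, hWx⟩ := (aux_spec _ _).mp hs
  by_contra! hr1
  have hAA : (Aᵀ * A).PosSemidef := by
    simpa [Matrix.conjTranspose_eq_transpose_of_trivial] using
      Matrix.posSemidef_conjTranspose_mul_self A
  have hM : (γ • (Aᵀ * A)).PosSemidef := hAA.smul hγ0.le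
  set M := γ • (Aᵀ * A) with hMdef
  rw [← Matrix.mulVec_mulVec] at hWx
  have hBx : (1 - M) *ᵥ x = x - M *ᵥ x := by rw [Matrix.sub_mulVec, Matrix.one_mulVec]
  set y := (1 - M) *ᵥ x with hy
  set z := M *ᵥ x with hz
  have hMt : Mᵀ = M := by simpa [Matrix.conjTranspose_eq_transpose_of_trivial] using hM.1.eq
  have hsym : ∀ u v : Fin n → ℝ, u ⬝ᵥ M *ᵥ v = (M *ᵥ u) ⬝ᵥ v := fun u v => by
    rw [Matrix.dotProduct_mulVec, ← Matrix.mulVec_transpose, hMt]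
  have h1 : 0 ≤ y ⬝ᵥ M *ᵥ y := by simpa using hM.dotProduct_mulVec_nonneg y
  have h2 : 0 ≤ y ⬝ᵥ (1 - W) *ᵥ y := by simpa using hW1.dotProduct_mulVec_nonneg y
  have h3 : 0 ≤ x ⬝ᵥ y := by simpa using hB.posSemidef.dotProduct_mulVec_nonneg x
  have hz0 : z = 0 := by
    by_contra hz0
    have h4 : 0 < z ⬝ᵥ (1 - M) *ᵥ z := by simpa using hB.dotProduct_mulVec_pos hz0
    rw [Matrix.sub_mulVec, Matrix.one_mulVec, hWx, dotProduct_sub, dotProduct_smul,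
      smul_eq_mul, dotProduct_comm y x] at h2
    have h5 : r * (x ⬝ᵥ y) ≥ x ⬝ᵥ y := by nlinarith
    rw [Matrix.sub_mulVec, Matrix.one_mulVec, dotProduct_sub] at h4
    have e1 : M *ᵥ y = z - M *ᵥ z := by rw [hBx, Matrix.mulVec_sub]
    rw [e1] at h1
    have e2 : x ⬝ᵥ M *ᵥ z = z ⬝ᵥ z := hsym x z
    rw [hBx] at h1 h2 h5
    simp only [dotProduct_sub, sub_dotProduct, e2] at h1 h2 h5
    have e3 := dotProduct_comm x z
    linarith
  have hAx : A *ᵥ x = 0 := by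
    have h6 : (Aᵀ * A) *ᵥ x = 0 := by
      have : γ • ((Aᵀ * A) *ᵥ x) = 0 := by rw [← Matrix.smul_mulVec, ← hMdef, ← hz, hz0]
      exact (smul_eq_zero.mp this).resolve_left hγ0.ne'
    have h7 : (A *ᵥ x) ⬝ᵥ (A *ᵥ x) = 0 := by
      have : x ⬝ᵥ (Aᵀ * A) *ᵥ x = 0 := by rw [h6, dotProduct_zero]
      rwa [← Matrix.mulVec_mulVec, Matrix.dotProduct_mulVec, Matrix.vecMul_transpose] at this
    exact dotProduct_self_eq_zero.mp h7
  have hyx : y = x := by rw [hBx, hz0, sub_zero]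
  rw [hyx] at hWx h2
  have hpos : 0 < x ⬝ᵥ x := by
    have := dotProduct_self_star_pos_iff.mpr hx
    simpa using this
  rw [Matrix.sub_mulVec, Matrix.one_mulVec, hWx, dotProduct_sub, dotProduct_smul,
      smul_eq_mul] at h2
  have : r = 1 := by nlinarith
  rw [this, one_smul] at hWx
  exact hx (hker x hAx hWx)
end

section
/- Let W be a real symmetric n×n matrix all of whose eigenvalues lie in [0,1], let A be a real m×n matrix, and suppose ker(A) ∩ fix(W) = {0}. Then for every μ > 0 and every θ ∈ (0,1], the matrix I_n + μAᵀA is invertible and every complex eigenvalue of P_{μ,θ} = (I_n + μAᵀA)^{−1}(θW + (1−θ)I_n) is real and lies in the interval [0,1). -/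
open Matrix

lemma aux_quad {n : ℕ} (M : Matrix (Fin n) (Fin n) ℝ) (hM : M.IsHermitian) (a b : Fin n → ℝ) :
    a ⬝ᵥ (M *ᵥ b) = b ⬝ᵥ (M *ᵥ a) := by
  have h : M.IsSymm := by simpa using hM
  rw [dotProduct_mulVec, ← mulVec_transpose, h.eq, dotProduct_comm]

lemma aux_spec_s8 {n : ℕ} (M V : Matrix (Fin n) (Fin n) ℝ) (hM : M.PosDef) (hV : V.PosSemidef)
    (hMV : (M - V).PosDef) (lam : ℂ) (hl : lam ∈ spectrum ℂ ((M⁻¹ * V).map Complex.ofReal)) :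
    ∃ r : ℝ, lam = (r : ℂ) ∧ 0 ≤ r ∧ r < 1 := by
  have hu : IsUnit M.det := (Matrix.isUnit_iff_isUnit_det _).1 hM.isUnit
  rw [spectrum.mem_iff, Matrix.isUnit_iff_isUnit_det, isUnit_iff_ne_zero, not_not,
    ← Matrix.exists_mulVec_eq_zero_iff] at hl
  obtain ⟨x, hx0, hx⟩ := hl
  set a : Fin n → ℝ := fun i => (x i).re with ha
  set b : Fin n → ℝ := fun i => (x i).im with hb
  have hx' : ((M⁻¹ * V).map Complex.ofReal) *ᵥ x = lam • x := by
    rw [sub_mulVec, Algebra.algebraMap_eq_smul_one, smul_mulVec, one_mulVec, sub_eq_zero] at hx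
    exact hx.symm
  have ea : (M⁻¹ * V) *ᵥ a = lam.re • a - lam.im • b := by
    ext i
    have := congrArg Complex.re (congrFun hx' i)
    simpa [mulVec, dotProduct, ha, hb] using this
  have eb : (M⁻¹ * V) *ᵥ b = lam.re • b + lam.im • a := by
    ext i
    have := congrArg Complex.im (congrFun hx' i)
    simpa [mulVec, dotProduct, ha, hb] using this
  have hMP : M * (M⁻¹ * V) = V := Matrix.mul_nonsing_inv_cancel_left _ _ hu
  have eVa : V *ᵥ a = lam.re • (M *ᵥ a) - lam.im • (M *ᵥ b) := by
    rw [← hMP, ← mulVec_mulVec, ea, mulVec_sub, mulVec_smul, mulVec_smul]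
  have eVb : V *ᵥ b = lam.re • (M *ᵥ b) + lam.im • (M *ᵥ a) := by
    rw [← hMP, ← mulVec_mulVec, eb, mulVec_add, mulVec_smul, mulVec_smul]
  have sM := aux_quad M hM.isHermitian a b
  have sV := aux_quad V hV.isHermitian a b
  have q1 : a ⬝ᵥ (V *ᵥ a) = lam.re * (a ⬝ᵥ (M *ᵥ a)) - lam.im * (a ⬝ᵥ (M *ᵥ b)) := by
    rw [eVa]; simp [dotProduct_sub]
  have q2 : b ⬝ᵥ (V *ᵥ b) = lam.re * (b ⬝ᵥ (M *ᵥ b)) + lam.im * (b ⬝ᵥ (M *ᵥ a)) := by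
    rw [eVb]; simp [dotProduct_add]
  have q3 : b ⬝ᵥ (V *ᵥ a) = lam.re * (b ⬝ᵥ (M *ᵥ a)) - lam.im * (b ⬝ᵥ (M *ᵥ b)) := by
    rw [eVa]; simp [dotProduct_sub]
  have q4 : a ⬝ᵥ (V *ᵥ b) = lam.re * (a ⬝ᵥ (M *ᵥ b)) + lam.im * (a ⬝ᵥ (M *ᵥ a)) := by
    rw [eVb]; simp [dotProduct_add]
  have hab : a ≠ 0 ∨ b ≠ 0 := by
    by_contra! h
    apply hx0
    ext i
    exact Complex.ext (congrFun h.1 i) (congrFun h.2 i)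
  have pos : ∀ N : Matrix (Fin n) (Fin n) ℝ, N.PosDef → 0 < a ⬝ᵥ (N *ᵥ a) + b ⬝ᵥ (N *ᵥ b) := by
    intro N hN
    have h1 : 0 ≤ a ⬝ᵥ (N *ᵥ a) := by simpa using hN.posSemidef.dotProduct_mulVec_nonneg a
    have h2 : 0 ≤ b ⬝ᵥ (N *ᵥ b) := by simpa using hN.posSemidef.dotProduct_mulVec_nonneg b
    rcases hab with h | h
    · have : 0 < a ⬝ᵥ (N *ᵥ a) := by simpa using hN.dotProduct_mulVec_pos h
      linarith
    · have : 0 < b ⬝ᵥ (N *ᵥ b) := by simpa using hN.dotProduct_mulVec_pos h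
      linarith
  have p1 := pos M hM
  have p2 := pos _ hMV
  have v1 : 0 ≤ a ⬝ᵥ (V *ᵥ a) := by simpa using hV.dotProduct_mulVec_nonneg a
  have v2 : 0 ≤ b ⬝ᵥ (V *ᵥ b) := by simpa using hV.dotProduct_mulVec_nonneg b
  simp only [sub_mulVec, dotProduct_sub] at p2
  have him : lam.im = 0 := by
    have : lam.im * (a ⬝ᵥ (M *ᵥ a) + b ⬝ᵥ (M *ᵥ b)) = 0 := by
      rw [sM] at q4
      linarith
    exact (mul_eq_zero.1 this).resolve_right p1.ne'
  rw [him] at q1 q2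
  refine ⟨lam.re, Complex.ext rfl (by simpa using him), ?_, ?_⟩
  · by_contra! h
    nlinarith
  · by_contra! h
    nlinarith

theorem stmt8 (n m : ℕ) (W : Matrix (Fin n) (Fin n) ℝ) (A : Matrix (Fin m) (Fin n) ℝ)
    (hW : W.PosSemidef) (hW1 : ((1 : Matrix (Fin n) (Fin n) ℝ) - W).PosSemidef)
    (hker : ∀ x : Fin n → ℝ, A *ᵥ x = 0 → W *ᵥ x = x → x = 0)
    (μ θ : ℝ) (hμ : 0 < μ) (hθ0 : 0 < θ) (hθ1 : θ ≤ 1) :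
    IsUnit ((1 : Matrix (Fin n) (Fin n) ℝ) + μ • (Aᵀ * A)) ∧
    ∀ lam ∈ spectrum ℂ
      ((((1 : Matrix (Fin n) (Fin n) ℝ) + μ • (Aᵀ * A))⁻¹ *
        (θ • W + (1 - θ) • (1 : Matrix (Fin n) (Fin n) ℝ))).map Complex.ofReal),
      ∃ r : ℝ, lam = (r : ℂ) ∧ 0 ≤ r ∧ r < 1 := by
  have hA : (Aᵀ * A).PosSemidef := by
    simpa using Matrix.posSemidef_conjTranspose_mul_self A
  have hM : ((1 : Matrix (Fin n) (Fin n) ℝ) + μ • (Aᵀ * A)).PosDef :=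
    Matrix.PosDef.one.add_posSemidef (hA.smul hμ.le)
  refine ⟨hM.isUnit, fun lam hl => aux_spec_s8 _ _ hM ?_ ?_ lam hl⟩
  · exact (hW.smul hθ0.le).add (Matrix.PosSemidef.one.smul (sub_nonneg.2 hθ1))
  · have e : (1 : Matrix (Fin n) (Fin n) ℝ) + μ • (Aᵀ * A) -
        (θ • W + (1 - θ) • (1 : Matrix (Fin n) (Fin n) ℝ)) = θ • (1 - W) + μ • (Aᵀ * A) := by
      module
    rw [e]
    refine Matrix.PosDef.of_dotProduct_mulVec_pos
      ((hW1.smul hθ0.le).add (hA.smul hμ.le)).isHermitian ?_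
    intro x hx
    have h1 : 0 ≤ x ⬝ᵥ ((1 - W) *ᵥ x) := by simpa using hW1.dotProduct_mulVec_nonneg x
    have h2 : 0 ≤ x ⬝ᵥ ((Aᵀ * A) *ᵥ x) := by simpa using hA.dotProduct_mulVec_nonneg x
    have e2 : star x ⬝ᵥ ((θ • (1 - W) + μ • (Aᵀ * A)) *ᵥ x) =
        θ * (x ⬝ᵥ ((1 - W) *ᵥ x)) + μ * (x ⬝ᵥ ((Aᵀ * A) *ᵥ x)) := by
      rw [add_mulVec, smul_mulVec, smul_mulVec, dotProduct_add, dotProduct_smul, dotProduct_smul]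
      simp
    rw [e2]
    by_contra! h
    have g1 := mul_nonneg hθ0.le h1
    have g2 := mul_nonneg hμ.le h2
    have z1 : x ⬝ᵥ ((1 - W) *ᵥ x) = 0 :=
      (mul_eq_zero.1 (by linarith : θ * (x ⬝ᵥ ((1 - W) *ᵥ x)) = 0)).resolve_left hθ0.ne'
    have z2 : x ⬝ᵥ ((Aᵀ * A) *ᵥ x) = 0 :=
      (mul_eq_zero.1 (by linarith : μ * (x ⬝ᵥ ((Aᵀ * A) *ᵥ x)) = 0)).resolve_left hμ.ne'
    have y1 : (1 - W) *ᵥ x = 0 := (hW1.dotProduct_mulVec_zero_iff x).1 (by simpa using z1)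
    have y2 : A *ᵥ x = 0 := by
      rw [← mulVec_mulVec, dotProduct_mulVec, vecMul_transpose] at z2
      exact dotProduct_self_eq_zero.1 z2
    apply hx
    apply hker x y2
    rw [sub_mulVec, one_mulVec, sub_eq_zero] at y1
    exact y1.symm
end

section
/- Let A be a real m×n matrix, b ∈ ℝ^m, and let W be a real symmetric n×n matrix all of whose eigenvalues lie in [0,1], with ker(A) ∩ fix(W) = {0}. Fix μ > 0, θ ∈ (0,1], and a real sequence {α_k}_{k≥1} with α_k → 1. Define P = (I_n + μAᵀA)^{−1}(θW + (1−θ)I_n) and r = μ(I_n + μAᵀA)^{−1}Aᵀb. Then I_n − P is invertible, and for all initializations x₀, v₀ ∈ ℝ^n, the α-RED-APG iterates defined for k ≥ 1 by x_k = (I_n + μAᵀA)^{−1}(v_{k−1} + μAᵀb), y_k = x_k + α_k(x_k − x_{k−1}), v_k = θ W y_k + (1−θ) y_k, converge linearly to x* := (I_n − P)^{−1} r: there exist C > 0, β ∈ [0,1), and K ≥ 1 such that ‖x_k − x*‖₂ ≤ C·β^k for all k ≥ K. -/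
open Filter Matrix

/-- The Euclidean (ℓ²) norm on `Fin n → ℝ`. -/
noncomputable def norm2 {n : ℕ} (x : Fin n → ℝ) : ℝ := Real.sqrt (∑ i, x i ^ 2)

/-- The resolvent matrix `(I + μ AᵀA)⁻¹` appearing in the proximal step for the
least-squares loss. -/
noncomputable def Hmat {n m : ℕ} (A : Matrix (Fin m) (Fin n) ℝ) (μ : ℝ) :
    Matrix (Fin n) (Fin n) ℝ :=
  ((1 : Matrix (Fin n) (Fin n) ℝ) + μ • (Aᵀ * A))⁻¹

/-- The transition matrix `P = (I + μ AᵀA)⁻¹ (θ W + (1-θ) I)` of RED-APG. -/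
noncomputable def Pmat {n m : ℕ} (A : Matrix (Fin m) (Fin n) ℝ)
    (W : Matrix (Fin n) (Fin n) ℝ) (μ θ : ℝ) : Matrix (Fin n) (Fin n) ℝ :=
  Hmat A μ * (θ • W + (1 - θ) • (1 : Matrix (Fin n) (Fin n) ℝ))

/-- Linear decay to zero of a real sequence. -/
def LinDec (f : ℕ → ℝ) : Prop :=
  ∃ C, 0 ≤ C ∧ ∃ β, 0 ≤ β ∧ β < 1 ∧ ∃ K : ℕ, ∀ k, K ≤ k → |f k| ≤ C * β ^ k

theorem LinDec.zero : LinDec (fun _ => 0) :=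
  ⟨0, le_refl _, 0, le_refl _, one_pos, 0, fun k _ => by simp⟩

theorem LinDec.add {f g : ℕ → ℝ} (hf : LinDec f) (hg : LinDec g) :
    LinDec (fun k => f k + g k) := by
  obtain ⟨C, hC, β, hβ, hβ1, K, h⟩ := hf
  obtain ⟨C', hC', β', hβ', hβ1', K', h'⟩ := hg
  refine ⟨C + C', by positivity, max β β', le_max_of_le_left hβ, max_lt hβ1 hβ1', max K K', ?_⟩
  intro k hk
  have h1 := h k (le_trans (le_max_left _ _) hk)
  have h2 := h' k (le_trans (le_max_right _ _) hk)
  have h3 : β ^ k ≤ (max β β') ^ k := pow_le_pow_left₀ hβ (le_max_left _ _) k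
  have h4 : β' ^ k ≤ (max β β') ^ k := pow_le_pow_left₀ hβ' (le_max_right _ _) k
  have h5 := abs_add_le (f k) (g k)
  nlinarith [mul_le_mul_of_nonneg_left h3 hC, mul_le_mul_of_nonneg_left h4 hC']

theorem LinDec.const_mul {f : ℕ → ℝ} (c : ℝ) (hf : LinDec f) : LinDec (fun k => c * f k) := by
  obtain ⟨C, hC, β, hβ, hβ1, K, h⟩ := hf
  refine ⟨|c| * C, by positivity, β, hβ, hβ1, K, fun k hk => ?_⟩
  rw [abs_mul, mul_assoc]
  exact mul_le_mul_of_nonneg_left (h k hk) (abs_nonneg _)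

theorem LinDec.abs {f : ℕ → ℝ} (hf : LinDec f) : LinDec (fun k => |f k|) := by
  obtain ⟨C, hC, β, hβ, hβ1, K, h⟩ := hf
  exact ⟨C, hC, β, hβ, hβ1, K, fun k hk => by rw [abs_abs]; exact h k hk⟩

theorem LinDec.sum {ι : Type*} (s : Finset ι) (f : ι → ℕ → ℝ) (hf : ∀ i, LinDec (f i)) :
    LinDec (fun k => ∑ i ∈ s, f i k) := by
  classical
  induction s using Finset.induction_on with
  | empty => simpa using LinDec.zero
  | insert a s ha ih =>
    simp only [Finset.sum_insert ha]
    exact (hf a).add ih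

theorem scalar_linDec (l : ℝ) (h0 : 0 ≤ l) (h1 : l < 1) (α : ℕ → ℝ)
    (hα : Tendsto α atTop (nhds 1)) (e : ℕ → ℝ)
    (he : ∀ k, 1 ≤ k → e (k + 1) = l * (e k + α k * (e k - e (k - 1)))) : LinDec e := by
  have hρ : l < (1 + l) / 2 := by linarith
  set ρ := (1 + l) / 2 with hρd
  have ht : Tendsto (fun k => l * α k ^ 2) atTop (nhds (l * 1 ^ 2)) := (hα.pow 2).const_mul l
  rw [one_pow, mul_one] at ht
  obtain ⟨K, hK⟩ := eventually_atTop.1 (ht.eventually_lt_const hρ)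
  set N := K + 1
  have hN1 : 1 ≤ N := by simp [N]
  let E : ℕ → ℝ := fun k => (1 - l) * e k ^ 2 + l * (e k - e (k - 1)) ^ 2
  have hl : 0 < 1 - l := by linarith
  have hE0 : ∀ k, 0 ≤ E k := fun k => by positivity
  have hρ0 : 0 < ρ := by linarith
  have hstep : ∀ k, N ≤ k → E (k + 1) ≤ ρ * E k := by
    intro k hk
    have hk1 : 1 ≤ k := hN1.trans hk
    have hlt := hK k (by omega)
    have e1 : E (k + 1) = l * ((1 - l) * e k ^ 2)
        + (l * α k ^ 2) * (l * (e k - e (k - 1)) ^ 2) := by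
      simp only [E, Nat.add_sub_cancel, he k hk1]; ring
    rw [e1]
    simp only [E]
    rw [mul_add]
    apply add_le_add
    · exact mul_le_mul_of_nonneg_right hρ.le (by positivity)
    · exact mul_le_mul_of_nonneg_right hlt.le (by positivity)
  have hdec : ∀ j, E (N + j) ≤ E N * ρ ^ j := by
    intro j
    induction j with
    | zero => simp
    | succ j ih =>
      calc E (N + j + 1) ≤ ρ * E (N + j) := hstep _ (by omega)
        _ ≤ ρ * (E N * ρ ^ j) := mul_le_mul_of_nonneg_left ih hρ0.le
        _ = _ := by ring
  refine ⟨√(E N / ((1 - l) * ρ ^ N)), Real.sqrt_nonneg _, √ρ, Real.sqrt_nonneg _, ?_, N, ?_⟩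
  · rw [Real.sqrt_lt' one_pos]; linarith
  · intro k hk
    obtain ⟨j, rfl⟩ := Nat.exists_eq_add_of_le hk
    have hh := hdec j
    apply abs_le_of_sq_le_sq _ (by positivity)
    rw [mul_pow, Real.sq_sqrt (by have := hE0 N; positivity), ← pow_mul, mul_comm (N + j) 2, pow_mul,
      Real.sq_sqrt hρ0.le, pow_add ρ N j, div_mul_eq_mul_div, le_div_iff₀ (by positivity)]
    have h2 : (1 - l) * e (N + j) ^ 2 ≤ E (N + j) := by
      simp only [E]; nlinarith [mul_nonneg h0 (sq_nonneg (e (N + j) - e (N + j - 1)))]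
    have := mul_le_mul_of_nonneg_right (h2.trans hh) (pow_pos hρ0 N).le
    linarith

theorem norm2_le_sum {n : ℕ} (x : Fin n → ℝ) : norm2 x ≤ ∑ i, |x i| := by
  unfold norm2
  apply Real.sqrt_le_iff.2 ⟨by positivity, ?_⟩
  have := Finset.sum_sq_le_sq_sum_of_nonneg (s := Finset.univ) (f := fun i => |x i|)
    (fun i _ => abs_nonneg _)
  simpa using this

theorem herm_diag {n : ℕ} (T : Matrix (Fin n) (Fin n) ℝ) (hT : T.IsHermitian) :
    ∃ (U : Matrix (Fin n) (Fin n) ℝ) (d : Fin n → ℝ), Uᴴ * U = 1 ∧ U * Uᴴ = 1 ∧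
      T = U * diagonal d * Uᴴ :=
  ⟨hT.eigenvectorUnitary.1, hT.eigenvalues, Unitary.coe_star_mul_self hT.eigenvectorUnitary,
    Unitary.coe_mul_star_self hT.eigenvectorUnitary, hT.spectral_theorem⟩

open scoped MatrixOrder ComplexOrder in
theorem exists_sqrt {n : ℕ} (M : Matrix (Fin n) (Fin n) ℝ) (hM : M.PosSemidef) :
    ∃ B : Matrix (Fin n) (Fin n) ℝ, M = Bᴴ * B :=
  CStarAlgebra.nonneg_iff_eq_star_mul_self.mp hM.nonneg

theorem exists_diag {n : ℕ} (M V : Matrix (Fin n) (Fin n) ℝ) (hM : M.PosDef) (hV : V.PosSemidef) :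
    ∃ (Q R : Matrix (Fin n) (Fin n) ℝ) (d : Fin n → ℝ), Q * R = 1 ∧ R * Q = 1 ∧
      M⁻¹ * V = Q * diagonal d * R := by
  obtain ⟨B, hB⟩ : ∃ B : Matrix (Fin n) (Fin n) ℝ, M = Bᴴ * B :=
    exists_sqrt M hM.posSemidef
  have hMu : IsUnit M.det := (Matrix.isUnit_iff_isUnit_det _).1 hM.isUnit
  have hBu : IsUnit B.det := by
    rw [hB, det_mul] at hMu
    exact isUnit_of_mul_isUnit_right hMu
  have hT : (B⁻¹ᴴ * V * B⁻¹).IsHermitian := isHermitian_conjTranspose_mul_mul _ hV.1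
  obtain ⟨U, d, hU1, hU2, hs'⟩ := herm_diag _ hT
  refine ⟨B⁻¹ * U, Uᴴ * B, d, ?_, ?_, ?_⟩
  · calc B⁻¹ * U * (Uᴴ * B) = B⁻¹ * (U * Uᴴ) * B := by simp only [Matrix.mul_assoc]
      _ = 1 := by rw [hU2, Matrix.mul_one, nonsing_inv_mul _ hBu]
  · calc Uᴴ * B * (B⁻¹ * U) = Uᴴ * (B * B⁻¹) * U := by simp only [Matrix.mul_assoc]
      _ = 1 := by rw [mul_nonsing_inv _ hBu, Matrix.mul_one, hU1]
  · calc M⁻¹ * V = B⁻¹ * B⁻¹ᴴ * V * (B⁻¹ * B) := by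
          rw [nonsing_inv_mul _ hBu, Matrix.mul_one, hB, Matrix.mul_inv_rev,
            conjTranspose_nonsing_inv]
      _ = B⁻¹ * (B⁻¹ᴴ * V * B⁻¹) * B := by simp only [Matrix.mul_assoc]
      _ = _ := by rw [hs']; simp only [Matrix.mul_assoc]

theorem stmt10 (n m : ℕ) (A : Matrix (Fin m) (Fin n) ℝ) (b : Fin m → ℝ)
    (W : Matrix (Fin n) (Fin n) ℝ)
    (hW : W.PosSemidef) (hW1 : ((1 : Matrix (Fin n) (Fin n) ℝ) - W).PosSemidef)
    (hker : ∀ x : Fin n → ℝ, A *ᵥ x = 0 → W *ᵥ x = x → x = 0)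
    (μ θ : ℝ) (hμ : 0 < μ) (hθ0 : 0 < θ) (hθ1 : θ ≤ 1)
    (α : ℕ → ℝ) (hα : Tendsto α atTop (nhds 1)) :
    IsUnit ((1 : Matrix (Fin n) (Fin n) ℝ) - Pmat A W μ θ) ∧
    ∀ x y v : ℕ → Fin n → ℝ,
      (∀ k, 1 ≤ k → x k = Hmat A μ *ᵥ (v (k - 1) + μ • (Aᵀ *ᵥ b))) →
      (∀ k, 1 ≤ k → y k = x k + α k • (x k - x (k - 1))) →
      (∀ k, 1 ≤ k → v k = θ • (W *ᵥ y k) + (1 - θ) • y k) →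
      ∃ C, 0 < C ∧ ∃ β, 0 ≤ β ∧ β < 1 ∧ ∃ K, 1 ≤ K ∧ ∀ k, K ≤ k →
        norm2 (x k -
          ((1 : Matrix (Fin n) (Fin n) ℝ) - Pmat A W μ θ)⁻¹ *ᵥ
            (μ • (Hmat A μ *ᵥ (Aᵀ *ᵥ b)))) ≤ C * β ^ k := by
  have hAA : (Aᵀ * A).PosSemidef := by
    have := Matrix.posSemidef_conjTranspose_mul_self A
    rwa [conjTranspose_eq_transpose_of_trivial] at this
  have hM : ((1 : Matrix (Fin n) (Fin n) ℝ) + μ • (Aᵀ * A)).PosDef :=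
    Matrix.PosDef.one.add_posSemidef (hAA.smul hμ.le)
  have hV : (θ • W + (1 - θ) • (1 : Matrix (Fin n) (Fin n) ℝ)).PosSemidef :=
    (hW.smul hθ0.le).add (Matrix.PosSemidef.one.smul (by linarith))
  have hlt : ∀ q : Fin n → ℝ, q ≠ 0 →
      q ⬝ᵥ ((θ • W + (1 - θ) • (1 : Matrix (Fin n) (Fin n) ℝ)) *ᵥ q) <
      q ⬝ᵥ (((1 : Matrix (Fin n) (Fin n) ℝ) + μ • (Aᵀ * A)) *ᵥ q) := by
    intro q hq
    have a1 : 0 ≤ q ⬝ᵥ ((1 - W) *ᵥ q) := by simpa using hW1.dotProduct_mulVec_nonneg q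
    have a2 : q ⬝ᵥ ((Aᵀ * A) *ᵥ q) = (A *ᵥ q) ⬝ᵥ (A *ᵥ q) := by
      rw [← mulVec_mulVec, dotProduct_mulVec, vecMul_transpose]
    have a3 : 0 ≤ (A *ᵥ q) ⬝ᵥ (A *ᵥ q) := by
      simpa using dotProduct_star_self_nonneg (A *ᵥ q)
    have a4 : q ⬝ᵥ (((1 : Matrix (Fin n) (Fin n) ℝ) + μ • (Aᵀ * A)) *ᵥ q)
       - q ⬝ᵥ ((θ • W + (1 - θ) • (1 : Matrix (Fin n) (Fin n) ℝ)) *ᵥ q)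
       = μ * ((A *ᵥ q) ⬝ᵥ (A *ᵥ q)) + θ * (q ⬝ᵥ ((1 - W) *ᵥ q)) := by
      rw [← a2]
      simp only [add_mulVec, sub_mulVec, smul_mulVec, one_mulVec, dotProduct_add, dotProduct_sub,
        dotProduct_smul, smul_eq_mul]
      ring
    by_contra hcon
    have b1 : (A *ᵥ q) ⬝ᵥ (A *ᵥ q) = 0 := by
      by_contra hne
      have : 0 < (A *ᵥ q) ⬝ᵥ (A *ᵥ q) := lt_of_le_of_ne a3 (Ne.symm hne)
      nlinarith [mul_pos hμ this, mul_nonneg hθ0.le a1]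
    have b2 : q ⬝ᵥ ((1 - W) *ᵥ q) = 0 := by
      by_contra hne
      have : 0 < q ⬝ᵥ ((1 - W) *ᵥ q) := lt_of_le_of_ne a1 (Ne.symm hne)
      nlinarith [mul_pos hθ0 this, mul_nonneg hμ.le a3]
    have b3 : A *ᵥ q = 0 := dotProduct_self_eq_zero.1 b1
    have b4 : (1 - W) *ᵥ q = 0 := (hW1.dotProduct_mulVec_zero_iff q).1 (by simpa using b2)
    rw [sub_mulVec, one_mulVec, sub_eq_zero] at b4
    exact hq (hker q b3 b4.symm)
  have hMu := (Matrix.isUnit_iff_isUnit_det _).1 hM.isUnit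
  obtain ⟨Q, R, d, hQR, hRQ, hP⟩ := exists_diag _ _ hM hV
  change Pmat A W μ θ = _ at hP
  have hMP : ((1 : Matrix (Fin n) (Fin n) ℝ) + μ • (Aᵀ * A)) * Pmat A W μ θ =
      θ • W + (1 - θ) • (1 : Matrix (Fin n) (Fin n) ℝ) := by
    unfold Pmat Hmat
    rw [← Matrix.mul_assoc, mul_nonsing_inv _ hMu, Matrix.one_mul]
  have hd : ∀ i, 0 ≤ d i ∧ d i < 1 := by
    intro i
    let q : Fin n → ℝ := Q *ᵥ Pi.single i 1
    have hRq : R *ᵥ q = Pi.single i 1 := by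
      simp only [q]; rw [mulVec_mulVec, hRQ, one_mulVec]
    have hq : q ≠ 0 := by
      intro h
      rw [h, mulVec_zero] at hRq
      have := congrFun hRq i
      simp at this
    have hPq : Pmat A W μ θ *ᵥ q = d i • q := by
      rw [hP, ← mulVec_mulVec, hRq, ← mulVec_mulVec, diagonal_mulVec_single, mul_one, ← mulVec_smul]
      congr 1
      ext j
      by_cases h : j = i
      · subst h; simp
      · simp [h]
    have hVq : (θ • W + (1 - θ) • (1 : Matrix (Fin n) (Fin n) ℝ)) *ᵥ q =
        d i • (((1 : Matrix (Fin n) (Fin n) ℝ) + μ • (Aᵀ * A)) *ᵥ q) := by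
      rw [← hMP, ← mulVec_mulVec, hPq, mulVec_smul]
    have c1 := hlt q hq
    have c2 : 0 ≤ q ⬝ᵥ ((θ • W + (1 - θ) • (1 : Matrix (Fin n) (Fin n) ℝ)) *ᵥ q) := by
      simpa using hV.dotProduct_mulVec_nonneg q
    rw [hVq, dotProduct_smul, smul_eq_mul] at c1 c2
    have c3 : 0 < q ⬝ᵥ (((1 : Matrix (Fin n) (Fin n) ℝ) + μ • (Aᵀ * A)) *ᵥ q) := by
      simpa using hM.dotProduct_mulVec_pos hq
    constructor
    · exact nonneg_of_mul_nonneg_left c2 c3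
    · by_contra h
      nlinarith
  have hunit : IsUnit ((1 : Matrix (Fin n) (Fin n) ℝ) - Pmat A W μ θ) := by
    rw [← Matrix.mulVec_injective_iff_isUnit]
    rw [← Matrix.coe_mulVecLin, ← LinearMap.ker_eq_bot, LinearMap.ker_eq_bot']
    intro q hq
    rw [mulVecLin_apply, sub_mulVec, one_mulVec, sub_eq_zero] at hq
    by_contra hne
    have c1 := hlt q hne
    rw [← hMP, ← mulVec_mulVec, ← hq] at c1
    exact lt_irrefl _ c1
  refine ⟨hunit, ?_⟩
  intro x y v hx hy hv
  have hud := (Matrix.isUnit_iff_isUnit_det _).1 hunit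
  set xs := ((1 : Matrix (Fin n) (Fin n) ℝ) - Pmat A W μ θ)⁻¹ *ᵥ
            (μ • (Hmat A μ *ᵥ (Aᵀ *ᵥ b))) with hxs
  have hfix : xs = Pmat A W μ θ *ᵥ xs + μ • (Hmat A μ *ᵥ (Aᵀ *ᵥ b)) := by
    have : ((1 : Matrix (Fin n) (Fin n) ℝ) - Pmat A W μ θ) *ᵥ xs =
        μ • (Hmat A μ *ᵥ (Aᵀ *ᵥ b)) := by
      rw [hxs, mulVec_mulVec, mul_nonsing_inv _ hud, one_mulVec]
    rw [← this, sub_mulVec, one_mulVec]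
    abel
  have hrec : ∀ k, 1 ≤ k → x (k + 1) - xs = Pmat A W μ θ *ᵥ
      ((x k - xs) + α k • ((x k - xs) - (x (k - 1) - xs))) := by
    intro k hk
    have e1 : x (k + 1) = Pmat A W μ θ *ᵥ y k + μ • (Hmat A μ *ᵥ (Aᵀ *ᵥ b)) := by
      rw [hx (k + 1) (by omega), Nat.add_sub_cancel, mulVec_add, mulVec_smul, hv k hk]
      congr 1
      unfold Pmat
      rw [← mulVec_mulVec]
      congr 1
      simp only [add_mulVec, smul_mulVec, one_mulVec]
    have e2 : (x k - xs) + α k • ((x k - xs) - (x (k - 1) - xs)) = y k - xs := by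
      rw [hy k hk, sub_sub_sub_cancel_right]; abel
    rw [e2, mulVec_sub, e1]
    nth_rewrite 1 [hfix]
    abel
  let w : ℕ → Fin n → ℝ := fun k => R *ᵥ (x k - xs)
  have hw : ∀ k, 1 ≤ k → ∀ i, w (k + 1) i = d i * (w k i + α k * (w k i - w (k - 1) i)) := by
    intro k hk i
    have : w (k + 1) = diagonal d *ᵥ (w k + α k • (w k - w (k - 1))) := by
      simp only [w]
      rw [hrec k hk, hP, mulVec_mulVec, ← Matrix.mul_assoc, ← Matrix.mul_assoc, hRQ, Matrix.one_mul,
        ← mulVec_mulVec, mulVec_add, mulVec_smul, mulVec_sub R (x k - xs)]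
    rw [this, mulVec_diagonal]
    simp
  have hwl : ∀ i, LinDec (fun k => w k i) := fun i =>
    scalar_linDec (d i) (hd i).1 (hd i).2 α hα _ (fun k hk => hw k hk i)
  have hxl : ∀ i, LinDec (fun k => (x k - xs) i) := by
    intro i
    have : (fun k => (x k - xs) i) = fun k => ∑ j, Q i j * w k j := by
      funext k
      have : x k - xs = Q *ᵥ w k := by
        simp only [w]; rw [mulVec_mulVec, hQR, one_mulVec]
      rw [this]; rfl
    rw [this]
    exact LinDec.sum _ (fun j k => Q i j * w k j) (fun j => (hwl j).const_mul _)
  obtain ⟨C, hC, β, hβ, hβ1, K, hK⟩ :=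
    LinDec.sum Finset.univ (fun i k => |(x k - xs) i|) (fun i => (hxl i).abs)
  refine ⟨C + 1, by linarith, β, hβ, hβ1, K + 1, by omega, fun k hk => ?_⟩
  have h1 := (le_abs_self _).trans (hK k (by omega))
  have h2 := norm2_le_sum (x k - xs)
  have h3 : 0 ≤ β ^ k := pow_nonneg hβ k
  linarith
end

section
/- Let K be a real n×n matrix that is symmetric positive semidefinite, entrywise nonnegative, irreducible, and has K_{ii} > 0 for all 1 ≤ i ≤ n. Let D = diag(K𝟙) be the diagonal matrix whose i-th diagonal entry is the i-th row sum of K. Then every diagonal entry of D is strictly positive (so W := D^{−1}K is well-defined), W is stochastic and irreducible, and every complex eigenvalue of W is real and lies in the interval [0,1]. -/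
open Matrix
open scoped ComplexOrder

theorem stmt13 (n : ℕ) (K : Matrix (Fin n) (Fin n) ℝ)
    (hK : K.PosSemidef) (hnonneg : ∀ i j, 0 ≤ K i j)
    (hirr : ∀ i j, ∃ k : ℕ, 0 < k ∧ 0 < (K ^ k) i j)
    (hdiag : ∀ i, 0 < K i i)
    (D : Matrix (Fin n) (Fin n) ℝ)
    (hD : D = Matrix.diagonal (K *ᵥ fun _ => (1 : ℝ)))
    (W : Matrix (Fin n) (Fin n) ℝ) (hW : W = D⁻¹ * K) :
    (∀ i, 0 < D i i) ∧
    (∀ i j, 0 ≤ W i j) ∧ (∀ i, ∑ j, W i j = 1) ∧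
    (∀ i j, ∃ k : ℕ, 0 < k ∧ 0 < (W ^ k) i j) ∧
    (∀ μ ∈ spectrum ℂ (W.map Complex.ofReal), ∃ r : ℝ, μ = (r : ℂ) ∧ 0 ≤ r ∧ r ≤ 1) := by

  obtain ⟨d, hd⟩ : ∃ d : Fin n → ℝ, d = K *ᵥ fun _ => (1 : ℝ) := ⟨_, rfl⟩
  rw [← hd] at hD
  have hdi : ∀ i, d i = ∑ j, K i j := by
    intro i; rw [hd]; simp [Matrix.mulVec, dotProduct]
  have hdpos : ∀ i, 0 < d i := by
    intro i
    rw [hdi]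
    exact Finset.sum_pos' (fun j _ => hnonneg i j) ⟨i, Finset.mem_univ _, hdiag i⟩
  have hDinv : D⁻¹ = Matrix.diagonal (fun i => (d i)⁻¹) := by
    apply Matrix.inv_eq_left_inv
    rw [hD, Matrix.diagonal_mul_diagonal, ← Matrix.diagonal_one]
    congr 1
    funext i
    exact inv_mul_cancel₀ (hdpos i).ne'
  have hWij : ∀ i j, W i j = (d i)⁻¹ * K i j := by
    intro i j
    rw [hW, hDinv, Matrix.diagonal_mul]
  have hWnn : ∀ i j, 0 ≤ W i j := by
    intro i j; rw [hWij]
    exact mul_nonneg (inv_nonneg.2 (hdpos i).le) (hnonneg i j)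
  have hWsum : ∀ i, ∑ j, W i j = 1 := by
    intro i
    simp_rw [hWij]
    rw [← Finset.mul_sum, ← hdi, inv_mul_cancel₀ (hdpos i).ne']
  have hpow : ∀ k : ℕ, ∀ i j, 0 ≤ (W ^ k) i j ∧ 0 ≤ (K ^ k) i j ∧
      (0 < (K ^ k) i j → 0 < (W ^ k) i j) := by
    intro k
    induction k with
    | zero =>
      intro i j
      by_cases h : i = j <;> simp [h]
    | succ k ih =>
      intro i j
      rw [pow_succ, pow_succ, Matrix.mul_apply, Matrix.mul_apply]
      refine ⟨Finset.sum_nonneg fun l _ => mul_nonneg (ih i l).1 (hWnn l j),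
        Finset.sum_nonneg fun l _ => mul_nonneg (ih i l).2.1 (hnonneg l j), fun h => ?_⟩
      obtain ⟨l, -, hl⟩ := Finset.exists_lt_of_sum_lt (s := Finset.univ)
        (f := fun _ : Fin n => (0 : ℝ)) (by simpa using h)
      have h1 : 0 < (K ^ k) i l := pos_of_mul_pos_left hl (hnonneg l j)
      have h2 : 0 < K l j := pos_of_mul_pos_right hl (ih i l).2.1
      refine Finset.sum_pos' (fun l _ => mul_nonneg (ih i l).1 (hWnn l j)) ⟨l, Finset.mem_univ _, ?_⟩
      refine mul_pos ((ih i l).2.2 h1) ?_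
      rw [hWij]
      exact mul_pos (inv_pos.2 (hdpos l)) h2
  refine ⟨fun i => by simpa [hD] using hdpos i, hWnn, hWsum, fun i j => ?_, fun μ hμ => ?_⟩
  · obtain ⟨k, hk, h⟩ := hirr i j
    exact ⟨k, hk, (hpow k i j).2.2 h⟩
  · rw [← Matrix.spectrum_toLin', ← Module.End.hasEigenvalue_iff_mem_spectrum] at hμ
    obtain ⟨v, hv⟩ := hμ.exists_hasEigenvector
    have hv0 : v ≠ 0 := hv.2
    have hev : ∀ i, ∑ j, (W i j : ℂ) * v j = μ * v i := by
      intro i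
      have := congrFun hv.apply_eq_smul i
      simpa [Matrix.toLin'_apply, Matrix.mulVec, dotProduct] using this
    have hKv : ∀ i, ∑ j, (K i j : ℂ) * v j = μ * (d i * v i) := by
      intro i
      have h0 : (d i : ℂ) ≠ 0 := by exact_mod_cast (hdpos i).ne'
      have := hev i
      simp_rw [hWij] at this
      calc ∑ j, (K i j : ℂ) * v j = d i * ∑ j, (((d i)⁻¹ * K i j : ℝ) : ℂ) * v j := by
            rw [Finset.mul_sum]
            refine Finset.sum_congr rfl fun j _ => ?_
            push_cast
            field_simp
        _ = _ := by rw [this]; ring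
    have hKc : (K.map Complex.ofReal).PosSemidef := by
      obtain ⟨B, hB⟩ : ∃ B : Matrix (Fin n) (Fin n) ℝ, K = Bᴴ * B := by
        open scoped MatrixOrder in
        exact CStarAlgebra.nonneg_iff_eq_star_mul_self.mp hK.nonneg
      have : K.map Complex.ofReal = (B.map Complex.ofReal)ᴴ * (B.map Complex.ofReal) := by
        ext i j
        simp [hB, Matrix.mul_apply]
      rw [this]
      exact Matrix.posSemidef_conjTranspose_mul_self _
    have hq := hKc.dotProduct_mulVec_nonneg v
    obtain ⟨i₀, hi₀⟩ := Function.ne_iff.1 hv0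
    have hS : 0 < ∑ i, d i * ‖v i‖ ^ 2 :=
      Finset.sum_pos' (fun i _ => mul_nonneg (hdpos i).le (sq_nonneg _))
        ⟨i₀, Finset.mem_univ _, mul_pos (hdpos i₀) (pow_pos (norm_pos_iff.2 hi₀) 2)⟩
    have hqe : star v ⬝ᵥ (K.map Complex.ofReal) *ᵥ v = μ * ((∑ i, d i * ‖v i‖ ^ 2 : ℝ) : ℂ) := by
      push_cast
      rw [Finset.mul_sum]
      refine Finset.sum_congr rfl fun i _ => ?_
      have : ((K.map Complex.ofReal) *ᵥ v) i = μ * (d i * v i) := hKv i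
      rw [this, ← Complex.conj_mul']
      simp only [Pi.star_apply, RCLike.star_def]
      ring
    rw [hqe, Complex.nonneg_iff, Complex.re_mul_ofReal, Complex.im_mul_ofReal] at hq
    have hre : 0 ≤ μ.re := nonneg_of_mul_nonneg_left hq.1 hS
    have him : μ.im = 0 := (mul_eq_zero.1 hq.2.symm).resolve_right hS.ne'
    refine ⟨μ.re, Complex.ext (by simp) (by simp [him]), hre, ?_⟩
    obtain ⟨m, -, hm⟩ := Finset.exists_max_image Finset.univ (fun i => ‖v i‖) ⟨i₀, Finset.mem_univ _⟩
    have hmpos : 0 < ‖v m‖ := (norm_pos_iff.2 hi₀).trans_le (hm i₀ (Finset.mem_univ _))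
    have hle : ‖μ‖ * ‖v m‖ ≤ 1 * ‖v m‖ := by
      rw [← norm_mul, ← hev m, ← hWsum m, Finset.sum_mul]
      refine (norm_sum_le _ _).trans (Finset.sum_le_sum fun j hj => ?_)
      rw [norm_mul, Complex.norm_real, Real.norm_of_nonneg (hWnn m j)]
      exact mul_le_mul_of_nonneg_left (hm j hj) (hWnn m j)
    exact (Complex.re_le_norm μ).trans (le_of_mul_le_mul_right hle hmpos)
end

section
/- Let K be a real n×n matrix that is symmetric positive semidefinite, entrywise nonnegative, irreducible, and has K_{ii} > 0 for all 1 ≤ i ≤ n. Let D = diag(K𝟙), let v̂ = D^{−1/2} K D^{−1/2} 𝟙, and let c = ‖v̂‖_∞. Then c > 0, and the matrix W := (1/c) D^{−1/2} K D^{−1/2} + diag(𝟙 − (1/c) v̂) is well-defined, symmetric, stochastic, irreducible, and every eigenvalue of W lies in the interval [0,1]. -/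
open Matrix

theorem aux_path (n : ℕ) (A B : Matrix (Fin n) (Fin n) ℝ)
    (hA : ∀ i j, 0 ≤ A i j) (hB : ∀ i j, 0 ≤ B i j) (h : ∀ i j, 0 < A i j → 0 < B i j)
    (k : ℕ) : ∀ i j, 0 < (A ^ k) i j → 0 < (B ^ k) i j := by
  induction k with
  | zero => intro i j h; simpa using h
  | succ m ih =>
    intro i j hp
    rw [pow_succ, Matrix.mul_apply] at hp ⊢
    rw [Finset.sum_pos_iff_of_nonneg (fun x _ => mul_nonneg (Matrix.pow_apply_nonneg hA m i x) (hA x j))] at hp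
    rw [Finset.sum_pos_iff_of_nonneg (fun x _ => mul_nonneg (Matrix.pow_apply_nonneg hB m i x) (hB x j))]
    obtain ⟨l, hl, hp⟩ := hp
    refine ⟨l, hl, mul_pos (ih _ _ ?_) (h _ _ ?_)⟩
    · exact pos_of_mul_pos_left hp (hA l j)
    · exact pos_of_mul_pos_right hp (Matrix.pow_apply_nonneg hA m i l)

open ComplexOrder MatrixOrder in
theorem aux_psd (n : ℕ) (A : Matrix (Fin n) (Fin n) ℝ) (hA : A.PosSemidef) :
    (A.map Complex.ofReal).PosSemidef := by
  obtain ⟨B, rfl⟩ := CStarAlgebra.nonneg_iff_eq_star_mul_self.mp hA.nonneg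
  rw [Matrix.star_eq_conjTranspose]
  have : (Bᴴ * B).map Complex.ofReal = (B.map Complex.ofReal)ᴴ * (B.map Complex.ofReal) := by
    ext i j
    simp [Matrix.mul_apply]
  rw [this]
  exact Matrix.posSemidef_conjTranspose_mul_self _

open ComplexOrder in
theorem aux_spec_s14 (n : ℕ) (W : Matrix (Fin n) (Fin n) ℝ) (hW : W.PosSemidef)
    (h0 : ∀ i j, 0 ≤ W i j) (h1 : ∀ i, ∑ j, W i j = 1)
    (μ : ℂ) (hμ : μ ∈ spectrum ℂ (W.map Complex.ofReal)) :
    ∃ r : ℝ, μ = (r : ℂ) ∧ 0 ≤ r ∧ r ≤ 1 := by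
  have hM := aux_psd n W hW
  rw [← Matrix.spectrum_toLin', ← Module.End.hasEigenvalue_iff_mem_spectrum] at hμ
  obtain ⟨k, hk⟩ := eigenvalue_mem_ball hμ
  obtain ⟨v, hv⟩ := hμ.exists_hasEigenvector
  have hv1 := hv.apply_eq_smul
  rw [Matrix.toLin'_apply] at hv1
  have hq := hM.dotProduct_mulVec_nonneg v
  rw [hv1, dotProduct_smul, smul_eq_mul] at hq
  have hpos : 0 < star v ⬝ᵥ v := by
    exact Matrix.dotProduct_star_self_pos_iff.2 hv.2
  have hnn : 0 ≤ μ := by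
    rw [Complex.lt_def] at hpos
    rw [Complex.nonneg_iff, Complex.mul_re, Complex.mul_im] at hq
    rw [Complex.nonneg_iff]
    obtain ⟨h1, h2⟩ := hpos
    obtain ⟨h3, h4⟩ := hq
    simp only [Complex.zero_re, Complex.zero_im] at h1 h2
    rw [← h2] at h3 h4
    simp only [mul_zero, sub_zero, zero_add] at h3 h4
    refine ⟨nonneg_of_mul_nonneg_left h3 h1, ?_⟩
    exact ((mul_eq_zero.1 h4.symm).resolve_right h1.ne').symm
  rw [Complex.nonneg_iff] at hnn
  have hre : μ = (μ.re : ℂ) := Complex.ext rfl (by simpa using hnn.2.symm)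
  refine ⟨μ.re, hre, hnn.1, ?_⟩
  have e : ∑ j ∈ Finset.univ.erase k, ‖(W.map Complex.ofReal) k j‖ = 1 - W k k := by
    rw [← h1 k, ← Finset.add_sum_erase _ _ (Finset.mem_univ k), add_sub_cancel_left]
    exact Finset.sum_congr rfl fun j _ => by simp [abs_of_nonneg (h0 k j)]
  rw [e, mem_closedBall_iff_norm] at hk
  have := (Complex.re_le_norm _).trans hk
  simp at this
  linarith

theorem stmt14 (n : ℕ) (hn : 0 < n) (K : Matrix (Fin n) (Fin n) ℝ)
    (hK : K.PosSemidef) (hnonneg : ∀ i j, 0 ≤ K i j)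
    (hirr : ∀ i j, ∃ k : ℕ, 0 < k ∧ 0 < (K ^ k) i j)
    (hdiag : ∀ i, 0 < K i i)
    (Dhalf : Matrix (Fin n) (Fin n) ℝ)
    (hDhalf : Dhalf = Matrix.diagonal (fun i => (Real.sqrt ((K *ᵥ fun _ => (1 : ℝ)) i))⁻¹))
    (vhat : Fin n → ℝ) (hvhat : vhat = (Dhalf * K * Dhalf) *ᵥ fun _ => (1 : ℝ))
    (c : ℝ) (hc : c = ⨆ i, |vhat i|)
    (W : Matrix (Fin n) (Fin n) ℝ)
    (hW : W = c⁻¹ • (Dhalf * K * Dhalf) + Matrix.diagonal (fun i => 1 - c⁻¹ * vhat i)) :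
    0 < c ∧
    W.IsSymm ∧
    (∀ i j, 0 ≤ W i j) ∧ (∀ i, ∑ j, W i j = 1) ∧
    (∀ i j, ∃ k : ℕ, 0 < k ∧ 0 < (W ^ k) i j) ∧
    (∀ μ ∈ spectrum ℂ (W.map Complex.ofReal), ∃ r : ℝ, μ = (r : ℂ) ∧ 0 ≤ r ∧ r ≤ 1) := by
  haveI : Nonempty (Fin n) := ⟨⟨0, hn⟩⟩
  set d : Fin n → ℝ := fun i => (Real.sqrt ((K *ᵥ fun _ => (1 : ℝ)) i))⁻¹ with hd
  have hdpos : ∀ i, 0 < d i := by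
    intro i
    refine inv_pos.2 (Real.sqrt_pos.2 ?_)
    simp only [Matrix.mulVec, dotProduct, mul_one]
    exact Finset.sum_pos' (fun j _ => hnonneg i j) ⟨i, Finset.mem_univ i, hdiag i⟩
  set S := Dhalf * K * Dhalf with hS
  have hSe : ∀ i j, S i j = d i * K i j * d j := by
    intro i j
    rw [hS, hDhalf, Matrix.mul_diagonal, Matrix.diagonal_mul]
  have hSpsd : S.PosSemidef := by
    have := hK.conjTranspose_mul_mul_same Dhalf
    have e : Dhalfᴴ = Dhalf := by rw [hDhalf]; simp [Matrix.diagonal_conjTranspose]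
    rwa [e] at this
  have hS0 : ∀ i j, 0 ≤ S i j := fun i j => by
    rw [hSe]; exact mul_nonneg (mul_nonneg (hdpos i).le (hnonneg i j)) (hdpos j).le
  have hSp : ∀ i j, 0 < K i j → 0 < S i j := fun i j h => by
    rw [hSe]; exact mul_pos (mul_pos (hdpos i) h) (hdpos j)
  have hve : ∀ i, vhat i = ∑ j, S i j := fun i => by
    rw [hvhat]; simp [Matrix.mulVec, dotProduct]
  have hvpos : ∀ i, 0 < vhat i := fun i => by
    rw [hve]
    exact Finset.sum_pos' (fun j _ => hS0 i j) ⟨i, Finset.mem_univ i, hSp i i (hdiag i)⟩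
  have hle : ∀ i, vhat i ≤ c := fun i => by
    rw [hc]
    exact (le_abs_self _).trans (le_ciSup (f := fun i => |vhat i|) (Set.finite_range _).bddAbove i)
  have hcpos : 0 < c := (hvpos ⟨0, hn⟩).trans_le (hle _)
  have hci : 0 < c⁻¹ := inv_pos.2 hcpos
  have hdg : ∀ i, 0 ≤ 1 - c⁻¹ * vhat i := fun i => by
    have := mul_le_mul_of_nonneg_left (hle i) hci.le
    rw [inv_mul_cancel₀ hcpos.ne'] at this
    linarith
  have hdpsd : (Matrix.diagonal (fun i => 1 - c⁻¹ * vhat i)).PosSemidef :=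
    Matrix.PosSemidef.diagonal hdg
  have hWpsd : W.PosSemidef := by
    rw [hW]; exact (hSpsd.smul hci.le).add hdpsd
  have hD0 : ∀ i j, 0 ≤ (Matrix.diagonal (fun i => 1 - c⁻¹ * vhat i)) i j := fun i j => by
    rw [Matrix.diagonal_apply]; split_ifs
    · exact hdg i
    · exact le_rfl
  have hW0 : ∀ i j, 0 ≤ W i j := fun i j => by
    rw [hW]; exact add_nonneg (mul_nonneg hci.le (hS0 i j)) (hD0 i j)
  have hWp : ∀ i j, 0 < K i j → 0 < W i j := fun i j h => by
    rw [hW]; exact add_pos_of_pos_of_nonneg (mul_pos hci (hSp i j h)) (hD0 i j)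
  have hW1 : ∀ i, ∑ j, W i j = 1 := fun i => by
    rw [hW]
    simp only [Matrix.add_apply, Matrix.smul_apply, smul_eq_mul, Finset.sum_add_distrib,
      ← Finset.mul_sum, ← hve, Matrix.diagonal_apply, Finset.sum_ite_eq, Finset.mem_univ, if_true]
    ring
  refine ⟨hcpos, ?_, hW0, hW1, ?_, aux_spec_s14 n W hWpsd hW0 hW1⟩
  · have := hWpsd.isHermitian
    rwa [Matrix.IsHermitian, Matrix.conjTranspose_eq_transpose_of_trivial] at this
  · intro i j
    obtain ⟨k, hk, hp⟩ := hirr i j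
    exact ⟨k, hk, aux_path n K W hnonneg hW0 hWp k i j hp⟩
end

section
/- Let W be a real symmetric n×n matrix that is positive semidefinite, stochastic (entrywise nonnegative with each row summing to 1), and irreducible, let A be a real m×n matrix with A𝟙 ≠ 0, and b ∈ ℝ^m. Fix λ > 0 and L ≥ 1, set μ = (λL)^{−1} and θ = 1/L, and let α_k = (t_k − 1)/t_{k+1} where t₁ = 1 and t_{k+1} = (1 + √(1 + 4t_k²))/2. Then there exists a unique x* ∈ ℝ^n such that for all initializations x₀, v₀ ∈ ℝ^n, the RED-APG iterates defined for k ≥ 1 by x_k = (I_n + μAᵀA)^{−1}(v_{k−1} + μAᵀb), y_k = x_k + α_k(x_k − x_{k−1}), v_k = θ W y_k + (1−θ) y_k, converge linearly to x*: there exist C > 0, β ∈ [0,1), and K ≥ 1 such that ‖x_k − x*‖₂ ≤ C·β^k for all k ≥ K. -/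
open Filter Matrix

/-- scalar step -/
theorem scal_step (κ ε a hee hed hdd gee ged' ged gdd gdd' gd'd' : ℝ)
    (hκ : 1 ≤ κ) (hε : ε * κ = 1 / 8) (ha0 : 0 ≤ a) (ha1 : a ≤ 1)
    (h1 : gd'd' - a * gdd' + hed + hdd = 0)
    (h2 : ged' - a * ged + hee + hed = 0)
    (p0 : 0 ≤ gdd) (p0' : 0 ≤ gd'd')
    (p1 : 0 ≤ gdd - 2 * gdd' + gd'd')
    (p1' : 0 ≤ gdd + 2 * gdd' + gd'd')
    (p2 : 0 ≤ gdd + 2 * (ε * 2) * ged + (ε * 2) ^ 2 * gee)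
    (p3 : 0 ≤ gee + 4 * ged' + 4 * gd'd')
    (p4 : 0 ≤ gee)
    (p5 : 0 ≤ (gee + 2 * ged' + gd'd') - 2 * (ged' + gd'd') + gd'd')
    (p6 : 0 ≤ (gee + 2 * ged' + gd'd') + 2 * (ged' + gd'd') + gd'd')
    (q0 : 0 ≤ hdd) (q1 : 0 ≤ hee + 2 * hed + hdd)
    (k1 : gee + 2 * ged' + gd'd' ≤ κ * (hee + 2 * hed + hdd))
    (k2 : gd'd' ≤ κ * hdd) :
    (1 + ε / (4 * κ)) * ((hee + 2 * hed + hdd) + gd'd' + ε * (ged' + gd'd') + ε * gd'd')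
      ≤ hee + gdd + ε * ged + ε * gdd := by
  have hκ0 : 0 < κ := by linarith
  have hε0 : 0 < ε := by
    by_contra h
    push Not at h
    nlinarith
  set E' := hee + 2 * hed + hdd with hE'
  have hε8 : ε ≤ 1 / 8 := by nlinarith
  have ek1 : ε * (gee + 2 * ged' + gd'd') ≤ 1 / 8 * E' := by
    have := mul_le_mul_of_nonneg_left k1 hε0.le
    rwa [← mul_assoc, hε] at this
  have ek2 : ε * gd'd' ≤ 1 / 8 * hdd := by
    have := mul_le_mul_of_nonneg_left k2 hε0.le
    rwa [← mul_assoc, hε] at this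
  -- energy decrease
  have s1 : E' + gd'd' + hdd ≤ hee + gdd - (1 - a) * gdd := by
    have : 2 * a * gdd' ≤ a * gdd + a * gd'd' := by nlinarith [mul_nonneg ha0 p1]
    have : a * gd'd' ≤ gd'd' := by nlinarith
    linarith
  have s2 : ε * (ged' + gd'd') = ε * ged - ε * (1 - a) * ged + ε * a * gdd' - ε * E' := by
    have : ged' + gd'd' = a * ged + a * gdd' - E' := by linarith
    rw [this]; ring
  have s3 : - (ε * (1 - a) * ged) ≤ (1 - a) * (gdd / 4) + ε * (ε * gee) := by
    have := mul_nonneg (sub_nonneg.2 ha1) p2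
    have h3 : (1 - a) * (ε * (ε * gee)) ≤ 1 * (ε * (ε * gee)) := by
      apply mul_le_mul_of_nonneg_right (by linarith); positivity
    nlinarith
  have s4 : ε * gee ≤ 1 / 4 * (E' + hdd) := by
    have : ε * gee ≤ ε * (2 * (gee + 2 * ged' + gd'd') + 2 * gd'd') :=
      mul_le_mul_of_nonneg_left (by linarith) hε0.le
    linarith
  have s4' : ε * (ε * gee) ≤ ε * (1 / 4 * (E' + hdd)) := mul_le_mul_of_nonneg_left s4 hε0.le
  have s5 : ε * a * gdd' ≤ ε * (gdd / 2 + gd'd' / 2) := by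
    have : a * gdd' ≤ gdd / 2 + gd'd' / 2 := by nlinarith [mul_nonneg ha0 p1]
    have := mul_le_mul_of_nonneg_left this hε0.le
    linarith
  have ehd : ε * hdd ≤ 1 / 8 * hdd := mul_le_mul_of_nonneg_right hε8 q0
  have egd : 0 ≤ ε * gdd := by positivity
  have m1 : 0 ≤ (1 - a) * gdd := mul_nonneg (by linarith) p0
  have main : E' + gd'd' + ε * (ged' + gd'd') + ε * gd'd' + ε / 2 * (E' + hdd)
      ≤ hee + gdd + ε * ged + ε * gdd := by
    have : 0 ≤ ε * E' := by positivity
    linarith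
  have up : E' + gd'd' + ε * (ged' + gd'd') + ε * gd'd' ≤ 2 * κ * (E' + hdd) := by
    have : ε * (2 * (ged' + gd'd')) ≤ ε * ((gee + 2 * ged' + gd'd') + gd'd') :=
      mul_le_mul_of_nonneg_left (by linarith) hε0.le
    nlinarith
  have up2 : ε / (4 * κ) * (E' + gd'd' + ε * (ged' + gd'd') + ε * gd'd')
      ≤ ε / 2 * (E' + hdd) := by
    have := mul_le_mul_of_nonneg_left up (by positivity : 0 ≤ ε / (4 * κ))
    have h : ε / (4 * κ) * (2 * κ * (E' + hdd)) = ε / 2 * (E' + hdd) := by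
      field_simp; ring
    linarith
  linarith

theorem coer (n : ℕ) (H : Matrix (Fin n) (Fin n) ℝ)
    (hpos : ∀ x, x ≠ 0 → 0 < x ⬝ᵥ H *ᵥ x) :
    ∃ κ : ℝ, 1 ≤ κ ∧ ∀ x : Fin n → ℝ, x ⬝ᵥ x ≤ κ * (x ⬝ᵥ H *ᵥ x) := by
  have hS : IsCompact (Metric.sphere (0 : Fin n → ℝ) 1) := isCompact_sphere _ _
  have hc : Continuous fun x : Fin n → ℝ => x ⬝ᵥ H *ᵥ x := by fun_prop
  obtain ⟨c, hc0, hcb⟩ : ∃ c : ℝ, 0 < c ∧ ∀ x ∈ Metric.sphere (0 : Fin n → ℝ) 1,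
      c ≤ x ⬝ᵥ H *ᵥ x := by
    rcases (Metric.sphere (0 : Fin n → ℝ) 1).eq_empty_or_nonempty with h | h
    · exact ⟨1, one_pos, by simp [h]⟩
    · obtain ⟨z, hz, hm⟩ := hS.exists_isMinOn h hc.continuousOn
      refine ⟨_, hpos z ?_, fun x hx => hm hx⟩
      rintro rfl
      simp at hz
  refine ⟨1 + n / c, by have : 0 ≤ n / c := by positivity
                        linarith, fun x => ?_⟩
  by_cases hx : x = 0
  · simp [hx]
  have hn : 0 < ‖x‖ := norm_pos_iff.2 hx
  have h1 := hcb (‖x‖⁻¹ • x) (by simp [norm_smul, hn.ne'])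
  simp only [mulVec_smul, dotProduct_smul, smul_dotProduct, smul_eq_mul] at h1
  have h2 : c * ‖x‖ ^ 2 ≤ x ⬝ᵥ H *ᵥ x := by
    have := mul_le_mul_of_nonneg_left h1 (sq_nonneg ‖x‖)
    have e : ‖x‖ ^ 2 * (‖x‖⁻¹ * (‖x‖⁻¹ * (x ⬝ᵥ H *ᵥ x))) = x ⬝ᵥ H *ᵥ x := by
      field_simp
    linarith
  have h3 : x ⬝ᵥ x ≤ n * ‖x‖ ^ 2 := by
    have : ∀ i ∈ Finset.univ, x i * x i ≤ ‖x‖ ^ 2 := fun i _ => by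
      have := norm_le_pi_norm x i
      rw [Real.norm_eq_abs] at this
      rw [← abs_mul_abs_self, ← sq]
      exact pow_le_pow_left₀ (abs_nonneg _) this 2
    have := Finset.sum_le_card_nsmul _ _ _ this
    simpa [dotProduct] using this
  have h4 : (n : ℝ) * ‖x‖ ^ 2 ≤ n / c * (x ⬝ᵥ H *ᵥ x) := by
    have := mul_le_mul_of_nonneg_left h2 (by positivity : (0:ℝ) ≤ n / c)
    have e : (n : ℝ) / c * (c * ‖x‖ ^ 2) = n * ‖x‖ ^ 2 := by field_simp
    linarith
  have := hpos x hx
  linarith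

theorem lap (n : ℕ) (W : Matrix (Fin n) (Fin n) ℝ) (hs : ∀ i j, W i j = W j i)
    (hrow : ∀ i, ∑ j, W i j = 1) (x : Fin n → ℝ) :
    x ⬝ᵥ x - x ⬝ᵥ W *ᵥ x = 1 / 2 * ∑ i, ∑ j, W i j * (x i - x j) ^ 2 := by
  have e1 : x ⬝ᵥ x = ∑ i, ∑ j, W i j * (x i * x i) := by
    simp only [← Finset.sum_mul, hrow, one_mul, dotProduct]
  have e2 : x ⬝ᵥ x = ∑ i, ∑ j, W i j * (x j * x j) := by
    rw [e1, Finset.sum_comm]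
    refine Finset.sum_congr rfl fun i _ => Finset.sum_congr rfl fun j _ => ?_
    rw [hs]
  have e3 : x ⬝ᵥ W *ᵥ x = ∑ i, ∑ j, W i j * (x i * x j) := by
    simp only [dotProduct, mulVec, Finset.mul_sum]
    refine Finset.sum_congr rfl fun i _ => Finset.sum_congr rfl fun j _ => by ring
  have : ∑ i, ∑ j, W i j * (x i - x j) ^ 2 = ∑ i, ∑ j, W i j * (x i * x i)
      + ∑ i, ∑ j, W i j * (x j * x j) - 2 * ∑ i, ∑ j, W i j * (x i * x j) := by
    simp only [Finset.mul_sum, ← Finset.sum_add_distrib, ← Finset.sum_sub_distrib]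
    refine Finset.sum_congr rfl fun i _ => Finset.sum_congr rfl fun j _ => by ring
  rw [this, ← e1, ← e2, ← e3]; ring

theorem const_of_lap (n : ℕ) (W : Matrix (Fin n) (Fin n) ℝ)
    (hnonneg : ∀ i j, 0 ≤ W i j) 
    (hirr : ∀ i j, ∃ k : ℕ, 0 < k ∧ 0 < (W ^ k) i j) (x : Fin n → ℝ)
    (h : ∑ i, ∑ j, W i j * (x i - x j) ^ 2 = 0) (i j : Fin n) : x i = x j := by
  have h0 : ∀ i j, W i j * (x i - x j) = 0 := by
    intro i j
    have h1 := (Finset.sum_eq_zero_iff_of_nonneg (fun i _ => Finset.sum_nonneg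
      fun j _ => mul_nonneg (hnonneg i j) (sq_nonneg _))).1 h i (Finset.mem_univ _)
    have h2 := (Finset.sum_eq_zero_iff_of_nonneg (fun j _ =>
      mul_nonneg (hnonneg i j) (sq_nonneg _))).1 h1 j (Finset.mem_univ _)
    rcases mul_eq_zero.1 h2 with h | h
    · simp [h]
    · simp [pow_eq_zero_iff] at h; simp [h]
  have hk : ∀ k : ℕ, ∀ i j, (W ^ k) i j * (x i - x j) = 0 := by
    intro k
    induction k with
    | zero =>
      intro i j
      by_cases hij : i = j
      · simp [hij]
      · simp [Matrix.one_apply, hij]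
    | succ k ih =>
      intro i j
      rw [pow_succ, Matrix.mul_apply, Finset.sum_mul]
      refine Finset.sum_eq_zero fun l _ => ?_
      have a := ih i l
      have b := h0 l j
      linear_combination W l j * a + (W ^ k) i l * b
  obtain ⟨k, _, hkp⟩ := hirr i j
  rcases mul_eq_zero.1 (hk k i j) with h | h
  · exact absurd h hkp.ne'
  · linarith

theorem t_ge (t : ℕ → ℝ) (ht1 : t 1 = 1)
    (ht : ∀ k, 1 ≤ k → t (k + 1) = (1 + Real.sqrt (1 + 4 * t k ^ 2)) / 2) (k : ℕ) (hk : 1 ≤ k) :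
    1 ≤ t k ∧ t k ≤ t (k + 1) := by
  have step : ∀ k, 1 ≤ k → t k ≤ t (k + 1) := by
    intro k hk
    rw [ht k hk]
    have : 2 * t k ≤ Real.sqrt (1 + 4 * t k ^ 2) := Real.le_sqrt_of_sq_le (by nlinarith)
    linarith
  refine ⟨?_, step k hk⟩
  induction k, hk using Nat.le_induction with
  | base => exact ht1.ge
  | succ k hk ih => exact ih.trans (step k hk)

/-- vector step: geometric decay of the Lyapunov function -/
theorem vec_step (n : ℕ) (G H : Matrix (Fin n) (Fin n) ℝ)
    (hGs : ∀ x y, x ⬝ᵥ G *ᵥ y = y ⬝ᵥ G *ᵥ x) (hHs : ∀ x y, x ⬝ᵥ H *ᵥ y = y ⬝ᵥ H *ᵥ x)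
    (hG : ∀ x, 0 ≤ x ⬝ᵥ G *ᵥ x) (hH : ∀ x, 0 ≤ x ⬝ᵥ H *ᵥ x)
    (κ ε a : ℝ) (hκ : 1 ≤ κ) (hε : ε * κ = 1 / 8) (ha0 : 0 ≤ a) (ha1 : a ≤ 1)
    (hk : ∀ x, x ⬝ᵥ G *ᵥ x ≤ κ * (x ⬝ᵥ H *ᵥ x))
    (e d e' d' : Fin n → ℝ) (hd' : e' = e + d')
    (heq : G *ᵥ (d' - a • d) + H *ᵥ e' = 0) :
    (1 + ε / (4 * κ)) * (e' ⬝ᵥ H *ᵥ e' + d' ⬝ᵥ G *ᵥ d' + ε * (e' ⬝ᵥ G *ᵥ d') +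
        ε * (d' ⬝ᵥ G *ᵥ d'))
      ≤ e ⬝ᵥ H *ᵥ e + d ⬝ᵥ G *ᵥ d + ε * (e ⬝ᵥ G *ᵥ d) + ε * (d ⬝ᵥ G *ᵥ d) := by
  subst hd'
  have z1 : d' ⬝ᵥ (G *ᵥ (d' - a • d) + H *ᵥ (e + d')) = 0 := by rw [heq]; simp
  have z2 : e ⬝ᵥ (G *ᵥ (d' - a • d) + H *ᵥ (e + d')) = 0 := by rw [heq]; simp
  have P := fun s : ℝ => fun u v => hG (u + s • v)
  have p1 := P (-1) d d'
  have p1' := P 1 d d'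
  have p2 := P (ε * 2) d e
  have p3 := P 2 e d'
  have p5 := P (-1) (e + d') d'
  have p6 := P 1 (e + d') d'
  have q1 := hH (e + d')
  have k1 := hk (e + d')
  have c1 := hGs d' d
  have c2 := hGs d' e
  have c3 := hGs d e
  have c4 := hHs d' e
  simp only [mulVec_add, mulVec_sub, mulVec_smul, dotProduct_add, dotProduct_sub, add_dotProduct,
    sub_dotProduct, dotProduct_smul, smul_dotProduct, smul_eq_mul, c1, c2, c3, c4] at *
  have := scal_step κ ε a (e ⬝ᵥ H *ᵥ e) (e ⬝ᵥ H *ᵥ d') (d' ⬝ᵥ H *ᵥ d') (e ⬝ᵥ G *ᵥ e)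
    (e ⬝ᵥ G *ᵥ d') (e ⬝ᵥ G *ᵥ d) (d ⬝ᵥ G *ᵥ d) (d ⬝ᵥ G *ᵥ d') (d' ⬝ᵥ G *ᵥ d') hκ hε ha0 ha1
    (by linarith) (by linarith) (hG d) (hG d') (by linarith) (by linarith) (by linarith)
    (by linarith) (hG e) (by linarith) (by linarith) (hH d') (by linarith) (by linarith) (hk d')
  convert this using 1 <;> ring

theorem stmt17 (n m : ℕ) (W : Matrix (Fin n) (Fin n) ℝ)
    (hW : W.PosSemidef)
    (hnonneg : ∀ i j, 0 ≤ W i j) (hrow : ∀ i, ∑ j, W i j = 1)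
    (hirr : ∀ i j, ∃ k : ℕ, 0 < k ∧ 0 < (W ^ k) i j)
    (A : Matrix (Fin m) (Fin n) ℝ)
    (hA1 : A *ᵥ (fun _ => (1 : ℝ)) ≠ 0)
    (b : Fin m → ℝ)
    (lam L : ℝ) (hlam : 0 < lam) (hL : 1 ≤ L)
    (μ θ : ℝ) (hμ : μ = (lam * L)⁻¹) (hθ : θ = 1 / L)
    (t α : ℕ → ℝ) (ht1 : t 1 = 1)
    (ht : ∀ k, 1 ≤ k → t (k + 1) = (1 + Real.sqrt (1 + 4 * t k ^ 2)) / 2)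
    (hα : ∀ k, 1 ≤ k → α k = (t k - 1) / t (k + 1)) :
    ∃! xs : Fin n → ℝ,
      ∀ x y v : ℕ → Fin n → ℝ,
        (∀ k, 1 ≤ k → x k =
          ((1 : Matrix (Fin n) (Fin n) ℝ) + μ • (Aᵀ * A))⁻¹ *ᵥ (v (k - 1) + μ • (Aᵀ *ᵥ b))) →
        (∀ k, 1 ≤ k → y k = x k + α k • (x k - x (k - 1))) →
        (∀ k, 1 ≤ k → v k = θ • (W *ᵥ y k) + (1 - θ) • y k) →
        ∃ C, 0 < C ∧ ∃ β, 0 ≤ β ∧ β < 1 ∧ ∃ K, 1 ≤ K ∧ ∀ k, K ≤ k →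
          norm2 (x k - xs) ≤ C * β ^ k := by
  have hL0 : 0 < L := by linarith
  have hμ0 : 0 < μ := by rw [hμ]; positivity
  have hθ0 : 0 < θ := by rw [hθ]; positivity
  have hθ1 : θ ≤ 1 := by rw [hθ, div_le_one hL0]; exact hL
  have hα01 : ∀ k, 1 ≤ k → 0 ≤ α k ∧ α k ≤ 1 := by
    intro k hk
    obtain ⟨h1, h2⟩ := t_ge t ht1 ht k hk
    rw [hα k hk]
    exact ⟨div_nonneg (by linarith) (by linarith), (div_le_one (by linarith)).2 (by linarith)⟩
  have hWs : ∀ i j, W i j = W j i := fun i j => by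
    have := congrFun (congrFun hW.isHermitian j) i
    simpa using this
  have hWp : ∀ x, 0 ≤ x ⬝ᵥ W *ᵥ x := fun x => by
    simpa using hW.dotProduct_mulVec_nonneg x
  have hWt : Wᵀ = W := by ext i j; exact hWs j i
  have sym : ∀ B : Matrix (Fin n) (Fin n) ℝ, Bᵀ = B → ∀ x y, x ⬝ᵥ B *ᵥ y = y ⬝ᵥ B *ᵥ x := by
    intro B hB x y
    rw [dotProduct_mulVec, ← mulVec_transpose, hB, dotProduct_comm]
  set M : Matrix (Fin n) (Fin n) ℝ := 1 + μ • (Aᵀ * A) with hM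
  set G : Matrix (Fin n) (Fin n) ℝ := θ • W + (1 - θ) • 1 with hGdef
  set H := M - G with hHdef
  have hGt : Gᵀ = G := by simp [hGdef, hWt]
  have hMt : Mᵀ = M := by simp [hM]
  have hHt : Hᵀ = H := by rw [hHdef, transpose_sub, hGt, hMt]
  have hGq : ∀ x, x ⬝ᵥ G *ᵥ x = θ * (x ⬝ᵥ W *ᵥ x) + (1 - θ) * (x ⬝ᵥ x) := fun x => by
    simp [hGdef, add_mulVec, smul_mulVec]
  have hMq : ∀ x, x ⬝ᵥ M *ᵥ x = x ⬝ᵥ x + μ * ((A *ᵥ x) ⬝ᵥ (A *ᵥ x)) := fun x => by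
    simp only [hM, add_mulVec, smul_mulVec, one_mulVec, dotProduct_add, dotProduct_smul,
      smul_eq_mul, ← mulVec_mulVec]
    rw [dotProduct_mulVec x Aᵀ, vecMul_transpose]
  have nn : ∀ {p : ℕ} (x : Fin p → ℝ), 0 ≤ x ⬝ᵥ x := fun x =>
    Finset.sum_nonneg fun i _ => mul_self_nonneg _
  have hlap := lap n W hWs hrow
  have hlapn : ∀ x : Fin n → ℝ, 0 ≤ ∑ i, ∑ j, W i j * (x i - x j) ^ 2 := fun x =>
    Finset.sum_nonneg fun i _ => Finset.sum_nonneg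
      fun j _ => mul_nonneg (hnonneg i j) (sq_nonneg _)
  have hGn : ∀ x, 0 ≤ x ⬝ᵥ G *ᵥ x := fun x => by
    rw [hGq]
    have := mul_nonneg hθ0.le (hWp x)
    have := mul_nonneg (sub_nonneg.2 hθ1) (nn x)
    linarith
  have hGle : ∀ x, x ⬝ᵥ G *ᵥ x ≤ x ⬝ᵥ x := fun x => by
    rw [hGq]
    have : 0 ≤ x ⬝ᵥ x - x ⬝ᵥ W *ᵥ x := by rw [hlap]; linarith [hlapn x]
    nlinarith
  have hHq : ∀ x, x ⬝ᵥ H *ᵥ x = θ / 2 * (∑ i, ∑ j, W i j * (x i - x j) ^ 2) +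
      μ * ((A *ᵥ x) ⬝ᵥ (A *ᵥ x)) := fun x => by
    rw [hHdef, sub_mulVec, dotProduct_sub, hMq, hGq]
    linear_combination θ * hlap x
  have hHn : ∀ x, 0 ≤ x ⬝ᵥ H *ᵥ x := fun x => by
    rw [hHq]
    have := hlapn x
    have := nn (A *ᵥ x)
    positivity
  have hHpos : ∀ x, x ≠ 0 → 0 < x ⬝ᵥ H *ᵥ x := by
    intro x hx
    refine lt_of_le_of_ne (hHn x) fun h0 => hx ?_
    rw [hHq] at h0
    have l1 := hlapn x
    have l2 := nn (A *ᵥ x)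
    have l3 := mul_nonneg (half_pos hθ0).le l1
    have l4 := mul_nonneg hμ0.le l2
    have z1 : ∑ i, ∑ j, W i j * (x i - x j) ^ 2 = 0 := by
      have : θ / 2 * (∑ i, ∑ j, W i j * (x i - x j) ^ 2) = 0 := by linarith
      exact (mul_eq_zero.1 this).resolve_left (half_pos hθ0).ne'
    have z2 : (A *ᵥ x) ⬝ᵥ (A *ᵥ x) = 0 := by
      have : μ * ((A *ᵥ x) ⬝ᵥ (A *ᵥ x)) = 0 := by linarith
      exact (mul_eq_zero.1 this).resolve_left hμ0.ne'
    have z3 : A *ᵥ x = 0 := dotProduct_self_eq_zero.1 z2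
    have hc := const_of_lap n W hnonneg hirr x z1
    funext i
    have hxc : x = x i • (fun _ => (1 : ℝ)) := by
      funext j; simp [hc j i]
    rw [hxc, mulVec_smul] at z3
    exact (smul_eq_zero.1 z3).resolve_right hA1
  have hMpos : ∀ x, x ≠ 0 → 0 < x ⬝ᵥ M *ᵥ x := fun x hx => by
    have : M = H + G := by simp [hHdef]
    rw [this, add_mulVec, dotProduct_add]
    linarith [hHpos x hx, hGn x]
  have inv : ∀ B : Matrix (Fin n) (Fin n) ℝ, (∀ x, x ≠ 0 → 0 < x ⬝ᵥ B *ᵥ x) → IsUnit B.det := by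
    intro B hB
    rw [isUnit_iff_ne_zero]
    intro h
    obtain ⟨v, hv, hv0⟩ := Matrix.exists_mulVec_eq_zero_iff.2 h
    have := hB v hv
    simp [hv0] at this
  have hMu := inv M hMpos
  have hHu := inv H hHpos
  obtain ⟨κ, hκ1, hκ⟩ := coer n H hHpos
  have hκ0 : 0 < κ := by linarith
  set c := μ • (Aᵀ *ᵥ b) with hc
  set xs := H⁻¹ *ᵥ c with hxs
  have hHxs : H *ᵥ xs = c := by
    rw [hxs, mulVec_mulVec, mul_nonsing_inv _ hHu, one_mulVec]
  have hMxs : M *ᵥ xs = G *ᵥ xs + c := by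
    rw [← hHxs, hHdef, sub_mulVec]; abel
  have hGv : ∀ z, θ • (W *ᵥ z) + (1 - θ) • z = G *ᵥ z := fun z => by
    simp [hGdef, add_mulVec, smul_mulVec]
  have n2 : ∀ z : Fin n → ℝ, norm2 z = Real.sqrt (z ⬝ᵥ z) := fun z => by
    simp [norm2, dotProduct, sq]
  refine ⟨xs, ?_, ?_⟩
  · intro x y v hx hy hv
    set ε := 1 / (8 * κ) with hεd
    have hε : ε * κ = 1 / 8 := by rw [hεd]; field_simp
    have hε0 : 0 < ε := by positivity
    set e : ℕ → Fin n → ℝ := fun k => x k - xs with he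
    set d : ℕ → Fin n → ℝ := fun k => x k - x (k - 1) with hd
    set V : ℕ → ℝ := fun k => e k ⬝ᵥ H *ᵥ e k + d k ⬝ᵥ G *ᵥ d k + ε * (e k ⬝ᵥ G *ᵥ d k) +
        ε * (d k ⬝ᵥ G *ᵥ d k) with hV
    have hk : ∀ x, x ⬝ᵥ G *ᵥ x ≤ κ * (x ⬝ᵥ H *ᵥ x) := fun x => (hGle x).trans (hκ x)
    have step : ∀ k, 1 ≤ k → (1 + ε / (4 * κ)) * V (k + 1) ≤ V k := by
      intro k hk1
      refine vec_step n G H (sym G hGt) (sym H hHt) hGn hHn κ ε (α k) hκ1 hε (hα01 k hk1).1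
        (hα01 k hk1).2 hk (e k) (d k) (e (k + 1)) (d (k + 1)) ?_ ?_
      · simp [he, hd]
      · have h1 : M *ᵥ x (k + 1) = G *ᵥ (x k + α k • d k) + c := by
          rw [hx (k + 1) (by omega), mulVec_mulVec, mul_nonsing_inv _ hMu, one_mulVec,
            Nat.add_sub_cancel, hv k hk1, hGv, hy k hk1]
        have h2 : H *ᵥ e (k + 1) = G *ᵥ (x k + α k • d k) - G *ᵥ x (k + 1) := by
          simp only [he]
          rw [mulVec_sub, hHxs, hHdef, sub_mulVec, h1]; abel
        rw [h2]
        simp only [hd, Nat.add_sub_cancel, mulVec_sub, mulVec_add]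
        abel
    have low : ∀ k, e k ⬝ᵥ H *ᵥ e k ≤ 2 * V k := by
      intro k
      have p := hGn (e k + (1 : ℝ) • d k)
      have cc := sym G hGt (d k) (e k)
      simp only [one_smul, mulVec_add, dotProduct_add, add_dotProduct, cc] at p
      have k1 := mul_le_mul_of_nonneg_left (hk (e k)) hε0.le
      rw [← mul_assoc, hε] at k1
      have k2 := hGn (d k)
      have k3 := hHn (e k)
      have p' := mul_nonneg hε0.le p
      have := mul_nonneg hε0.le k2
      simp only [hV]
      linarith
    set r := (1 + ε / (4 * κ))⁻¹ with hr
    have hpos : 0 < ε / (4 * κ) := by positivity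
    have hr0 : 0 < r := by positivity
    have hr1 : r < 1 := inv_lt_one_of_one_lt₀ (by linarith)
    have dec : ∀ k, V (k + 1) ≤ r ^ k * V 1 := by
      intro k
      induction k with
      | zero => simp
      | succ k ih =>
        have s := mul_le_mul_of_nonneg_left (step (k + 1) (by omega)) hr0.le
        rw [← mul_assoc, hr, inv_mul_cancel₀ (by linarith), one_mul, ← hr] at s
        refine s.trans ?_
        rw [pow_succ', mul_assoc]
        exact mul_le_mul_of_nonneg_left ih hr0.le
    have V1 : 0 ≤ V 1 := by linarith [low 1, hHn (e 1)]
    refine ⟨Real.sqrt (2 * κ * V 1 / r) + 1, by positivity, Real.sqrt r, Real.sqrt_nonneg _, ?_, 1,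
      le_rfl, ?_⟩
    · rw [Real.sqrt_lt' one_pos]; simpa using hr1
    · intro k hk1
      obtain ⟨j, rfl⟩ : ∃ j, k = j + 1 := ⟨k - 1, by omega⟩
      rw [n2]
      have b1 : (x (j + 1) - xs) ⬝ᵥ (x (j + 1) - xs) ≤ 2 * κ * V 1 / r * r ^ (j + 1) := by
        have a1 := hκ (e (j + 1))
        have a2 := mul_le_mul_of_nonneg_left ((low (j + 1)).trans
          (mul_le_mul_of_nonneg_left (dec j) zero_le_two)) hκ0.le
        have a3 : 2 * κ * V 1 / r * r ^ (j + 1) = κ * (2 * (r ^ j * V 1)) := by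
          rw [pow_succ]; field_simp
        rw [a3]
        exact a1.trans a2
      have b2 : Real.sqrt r ^ (j + 1) = Real.sqrt (r ^ (j + 1)) := by
        symm
        rw [Real.sqrt_eq_iff_mul_self_eq (by positivity) (by positivity), ← mul_pow,
          Real.mul_self_sqrt hr0.le]
      calc _ ≤ _ := Real.sqrt_le_sqrt b1
        _ = Real.sqrt (2 * κ * V 1 / r) * Real.sqrt r ^ (j + 1) := by
          rw [Real.sqrt_mul (by positivity), b2]
        _ ≤ _ := mul_le_mul_of_nonneg_right (by linarith) (by positivity)
  · intro z hz
    obtain ⟨C, hC, β, hβ0, hβ1, K, hK, hb⟩ := hz (fun _ => xs) (fun _ => xs) (fun _ => G *ᵥ xs)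
      (fun k _ => by
        rw [← hMxs, mulVec_mulVec, nonsing_inv_mul _ hMu, one_mulVec])
      (fun k _ => by simp) (fun k _ => by simp only [hGv])
    have lim : Tendsto (fun k : ℕ => C * β ^ k) atTop (nhds 0) := by
      simpa using (tendsto_pow_atTop_nhds_zero_of_lt_one hβ0 hβ1).const_mul C
    have h0 : norm2 (xs - z) ≤ 0 := ge_of_tendsto lim (eventually_atTop.2 ⟨K, hb⟩)
    rw [n2] at h0
    have h1 := Real.sqrt_eq_zero'.1 (le_antisymm h0 (Real.sqrt_nonneg _))
    have h2 := dotProduct_self_eq_zero.1 (le_antisymm h1 (nn _))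
    exact (sub_eq_zero.1 h2).symm
end
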